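/- arXiv:math/0609449 — 5 statements merged into one kernel-verified Lean document; each statement's English description precedes it below -/
import Mathlib

section
/- Let N and n be positive integers and let g be an N×N matrix with rational entries satisfying g^n = 1. Then there exists a unique family of integers (m_k), indexed by the positive divisors k of n, such that det(1 − X·g) = ∏_{k∣n} (1 − X^k)^{m_k} holds in the field ℚ(X) of rational functions (equivalently, det(1 − X·g) · ∏_{k : m_k < 0} (1 − X^k)^{−m_k} = ∏_{k : m_k ≥ 0} (1 − X^k)^{m_k} as an identity of polynomials in ℚ[X]). Moreover ∑_{k∣n} k·m_k = N. -/
open Polynomial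

/-!
The roots of the characteristic polynomial of `g` are `n`-th roots of unity, so over `ℚ` it is a
product of cyclotomic polynomials `Φ_d` with `d ∣ n`. Reversal is multiplicative, and
`1 - X ^ d` is the product of the reversed `Φ_i` over `i ∣ d`; by induction on `d` each reversed
`Φ_d` is thus a product of integer powers of the `1 - X ^ k` with `k ∣ d`
(`isFrameProduct_reverse_cyclotomic`), and hence so is the reversed characteristic polynomial
(`isFrameProduct_reverse`).

For uniqueness it suffices that `∏ (1 - X ^ k) ^ m k = 1` forces `m = 0` on the divisors of `n`
(`eq_zero_of_prod_eq_one`). If `m` vanishes on all divisors larger than `k`, apply the `Φ_k`-adic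
valuation of `ℚ(X)`: `Φ_k` divides `1 - X ^ k` but not `1 - X ^ j` for `0 < j < k`, so `m k = 0`.

The formula `∑ k * m k = N` compares degrees of rational functions; the reversed characteristic
polynomial has degree exactly `N` because `det g ≠ 0`.
-/

/-- `f` is a product of integer powers of the rational functions `1 - X ^ k`, `k ∣ n`. -/
def IsFrameProduct (n : ℕ) (f : RatFunc ℚ) : Prop :=
  ∃ m : ℕ → ℤ, f = ∏ k ∈ n.divisors, (1 - (RatFunc.X : RatFunc ℚ) ^ k) ^ (m k)

lemma one_sub_X_pow_ne_zero {k : ℕ} (hk : 0 < k) : (1 - X ^ k : ℚ[X]) ≠ 0 := by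
  rw [← neg_ne_zero, neg_sub]
  exact X_pow_sub_C_ne_zero hk 1

lemma algebraMap_one_sub_X_pow (k : ℕ) :
    algebraMap ℚ[X] (RatFunc ℚ) (1 - X ^ k) = 1 - RatFunc.X ^ k := by
  simp [RatFunc.algebraMap_X]

lemma ratFunc_one_sub_X_pow_ne_zero {k : ℕ} (hk : 0 < k) :
    (1 - (RatFunc.X : RatFunc ℚ) ^ k) ≠ 0 := by
  rw [← algebraMap_one_sub_X_pow]
  exact RatFunc.algebraMap_ne_zero (one_sub_X_pow_ne_zero hk)

namespace IsFrameProduct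

lemma one (n : ℕ) : IsFrameProduct n 1 := ⟨0, by simp⟩

lemma mul {n : ℕ} {f f' : RatFunc ℚ} (h : IsFrameProduct n f) (h' : IsFrameProduct n f') :
    IsFrameProduct n (f * f') := by
  obtain ⟨m, rfl⟩ := h
  obtain ⟨m', rfl⟩ := h'
  refine ⟨m + m', ?_⟩
  rw [← Finset.prod_mul_distrib]
  refine Finset.prod_congr rfl fun k hk => ?_
  rw [Pi.add_apply, zpow_add₀ (ratFunc_one_sub_X_pow_ne_zero (Nat.pos_of_mem_divisors hk))]

lemma inv {n : ℕ} {f : RatFunc ℚ} (h : IsFrameProduct n f) : IsFrameProduct n f⁻¹ := by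
  obtain ⟨m, rfl⟩ := h
  exact ⟨-m, by simp⟩

lemma prod {n : ℕ} {ι : Type*} (s : Finset ι) (f : ι → RatFunc ℚ)
    (h : ∀ i ∈ s, IsFrameProduct n (f i)) : IsFrameProduct n (∏ i ∈ s, f i) :=
  Finset.prod_induction f _ (fun _ _ => mul) (one n) h

lemma one_sub_X_pow {n k : ℕ} (hk : k ∈ n.divisors) :
    IsFrameProduct n (1 - RatFunc.X ^ k) := by
  refine ⟨Pi.single k 1, ?_⟩
  rw [Finset.prod_eq_single_of_mem k hk (fun j _ hj => by simp [hj])]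
  simp

end IsFrameProduct

lemma reverse_X_pow_sub_one (k : ℕ) : (X ^ k - 1 : ℚ[X]).reverse = 1 - X ^ k := by
  have h : (X ^ k - 1 : ℚ[X]).natDegree = k := natDegree_X_pow_sub_C (r := 1)
  rw [reverse, h, reflect_sub, reflect_monomial, reflect_one]
  simp [revAt_le]

lemma reverse_prod {ι : Type*} (s : Finset ι) (f : ι → ℚ[X]) :
    (∏ i ∈ s, f i).reverse = ∏ i ∈ s, (f i).reverse := by
  classical
  induction s using Finset.induction_on with
  | empty => simpa using reverse_C (1 : ℚ)
  | insert a s ha ih => rw [Finset.prod_insert ha, Finset.prod_insert ha, reverse_mul_of_domain, ih]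

lemma isFrameProduct_reverse_cyclotomic (n d : ℕ) (hd : d ∈ n.divisors) :
    IsFrameProduct n (algebraMap ℚ[X] (RatFunc ℚ) (cyclotomic d ℚ).reverse) := by
  induction d using Nat.strong_induction_on with
  | _ d ih =>
    have hd0 : 0 < d := Nat.pos_of_mem_divisors hd
    have key : (1 - RatFunc.X ^ d : RatFunc ℚ) =
        (∏ i ∈ d.properDivisors, algebraMap ℚ[X] (RatFunc ℚ) (cyclotomic i ℚ).reverse) *
          algebraMap ℚ[X] (RatFunc ℚ) (cyclotomic d ℚ).reverse := by
      rw [← algebraMap_one_sub_X_pow, ← reverse_X_pow_sub_one d,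
        ← prod_cyclotomic_eq_X_pow_sub_one hd0, reverse_prod, map_prod,
        ← Nat.insert_self_properDivisors hd0.ne',
        Finset.prod_insert Nat.self_notMem_properDivisors, mul_comm]
    have hne : (∏ i ∈ d.properDivisors,
        algebraMap ℚ[X] (RatFunc ℚ) (cyclotomic i ℚ).reverse) ≠ 0 := by
      refine Finset.prod_ne_zero_iff.mpr fun i _ => RatFunc.algebraMap_ne_zero ?_
      rw [Ne, reverse_eq_zero]
      exact cyclotomic_ne_zero i ℚ
    have heq := (eq_inv_mul_iff_mul_eq₀ hne).mpr key.symm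
    rw [heq]
    refine (IsFrameProduct.prod _ _ fun i hi => ?_).inv.mul (IsFrameProduct.one_sub_X_pow hd)
    rw [Nat.mem_properDivisors] at hi
    refine ih i hi.2 ?_
    rw [Nat.mem_divisors] at hd ⊢
    exact ⟨hi.1.trans hd.1, hd.2⟩

/-- A monic polynomial all of whose complex roots are `n`-th roots of unity is a product of
cyclotomic polynomials, so its reversal is a product of powers of the `1 - X ^ k`. -/
lemma isFrameProduct_reverse (n : ℕ) (hn : 0 < n) (P : ℚ[X]) (hP : P.Monic)
    (hroots : ∀ z : ℂ, aeval z P = 0 → z ^ n = 1) :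
    IsFrameProduct n (algebraMap ℚ[X] (RatFunc ℚ) P.reverse) := by
  induction hN : P.natDegree using Nat.strong_induction_on generalizing P with
  | _ N ih =>
    by_cases h0 : P.natDegree = 0
    · rw [(Monic.natDegree_eq_zero hP).mp h0, ← C_1, reverse_C, C_1, map_one]
      exact IsFrameProduct.one n
    · obtain ⟨z, hz⟩ := IsAlgClosed.exists_aeval_eq_zero ℂ P
        (fun h => h0 (natDegree_eq_of_degree_eq_some h))
      have hzn := hroots z hz
      have hd : orderOf z ∣ n := orderOf_dvd_of_pow_eq_one hzn
      have hd0 : 0 < orderOf z := Nat.pos_of_dvd_of_pos hd hn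
      have hdvd : cyclotomic (orderOf z) ℚ ∣ P := by
        rw [cyclotomic_eq_minpoly_rat (IsPrimitiveRoot.orderOf z) hd0]
        exact minpoly.dvd ℚ z hz
      obtain ⟨Q, rfl⟩ := hdvd
      have hΦ := cyclotomic.monic (orderOf z) ℚ
      have hQ : Q.Monic := hΦ.of_mul_monic_left hP
      rw [reverse_mul_of_domain, map_mul]
      refine (isFrameProduct_reverse_cyclotomic n _ (Nat.mem_divisors.mpr ⟨hd, hn.ne'⟩)).mul
        (ih Q.natDegree ?_ Q hQ (fun w hw => hroots w (by simp [hw])) rfl)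
      rw [← hN, hΦ.natDegree_mul hQ, natDegree_cyclotomic]
      have := Nat.totient_pos.mpr hd0
      omega

lemma pow_eq_one_of_aeval_charpoly {N n : ℕ} (g : Matrix (Fin N) (Fin N) ℚ) (hg : g ^ n = 1)
    (z : ℂ) (hz : aeval z g.charpoly = 0) : z ^ n = 1 := by
  set A : Matrix (Fin N) (Fin N) ℂ := (algebraMap ℚ ℂ).mapMatrix g with hA
  have hAn : A ^ n = 1 := by rw [hA, ← map_pow, hg, map_one]
  have hmem : z ∈ spectrum ℂ A := by
    rw [Matrix.mem_spectrum_iff_isRoot_charpoly, hA, RingHom.mapMatrix_apply,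
      Matrix.charpoly_map, IsRoot, eval_map_algebraMap]
    exact hz
  have hpow := spectrum.pow_mem_pow A n hmem
  rw [hAn] at hpow
  rcases isEmpty_or_nonempty (Fin N) with h | h
  · rw [spectrum.of_subsingleton] at hpow
    exact hpow.elim
  · rw [spectrum.one_eq] at hpow
    exact hpow

/-- The place of `ℚ(X)` given by the irreducible polynomial `Φ_k`. -/
noncomputable def cyclotomicPlace (k : ℕ) (hk : 0 < k) :
    IsDedekindDomain.HeightOneSpectrum ℚ[X] where
  asIdeal := Ideal.span {cyclotomic k ℚ}
  isPrime := (Ideal.span_singleton_prime (cyclotomic_ne_zero k ℚ)).mpr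
    (cyclotomic.irreducible_rat hk).prime
  ne_bot := by
    rw [Ne, Ideal.span_singleton_eq_bot]
    exact cyclotomic_ne_zero k ℚ

lemma cyclotomicPlace_valuation_lt_one (k : ℕ) (hk : 0 < k) :
    (cyclotomicPlace k hk).valuation (RatFunc ℚ) (1 - RatFunc.X ^ k) < 1 := by
  rw [← algebraMap_one_sub_X_pow,
    IsDedekindDomain.HeightOneSpectrum.valuation_lt_one_iff_mem]
  refine Ideal.mem_span_singleton.mpr ?_
  rw [← dvd_neg, neg_sub]
  exact cyclotomic.dvd_X_pow_sub_one k ℚ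

lemma cyclotomicPlace_valuation_eq_one (k : ℕ) (hk : 0 < k) (j : ℕ) (hj : 0 < j) (hjk : j < k) :
    (cyclotomicPlace k hk).valuation (RatFunc ℚ) (1 - RatFunc.X ^ j) = 1 := by
  rw [← algebraMap_one_sub_X_pow,
    IsDedekindDomain.HeightOneSpectrum.valuation_eq_one_iff_notMem]
  intro hmem
  have hdvd : cyclotomic k ℚ ∣ 1 - X ^ j := Ideal.mem_span_singleton.mp hmem
  have hζ := Complex.isPrimitiveRoot_exp k hk.ne'
  rw [cyclotomic_eq_minpoly_rat hζ hk, minpoly.dvd_iff] at hdvd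
  exact hζ.pow_ne_one_of_pos_of_lt hj.ne' hjk (sub_eq_zero.mp (by simpa using hdvd)).symm

lemma eq_zero_of_prod_eq_one (n : ℕ) (m : ℕ → ℤ)
    (h : ∏ k ∈ n.divisors, (1 - (RatFunc.X : RatFunc ℚ) ^ k) ^ (m k) = 1) :
    ∀ k ∈ n.divisors, m k = 0 := by
  by_contra! hcon
  -- the largest divisor with a nonzero exponent
  obtain ⟨k, hk, hmax⟩ := (n.divisors.filter (fun k => m k ≠ 0)).exists_max_image id
    (by obtain ⟨k, hk, hk'⟩ := hcon; exact ⟨k, Finset.mem_filter.mpr ⟨hk, hk'⟩⟩)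
  rw [Finset.mem_filter] at hk
  have hk0 : 0 < k := Nat.pos_of_mem_divisors hk.1
  have hv := congrArg ((cyclotomicPlace k hk0).valuation (RatFunc ℚ)) h
  rw [map_prod, map_one, Finset.prod_eq_single_of_mem k hk.1, map_zpow₀] at hv
  · have hlt := cyclotomicPlace_valuation_lt_one k hk0
    have hne : (cyclotomicPlace k hk0).valuation (RatFunc ℚ) (1 - RatFunc.X ^ k) ≠ 0 :=
      (Valuation.ne_zero_iff _).mpr (ratFunc_one_sub_X_pow_ne_zero hk0)
    exact hk.2 ((zpow_eq_one_iff_right₀ zero_le hlt.ne).mp hv)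
  · intro j hj hjk
    rcases lt_or_gt_of_ne hjk with hlt | hgt
    · rw [map_zpow₀, cyclotomicPlace_valuation_eq_one k hk0 j (Nat.pos_of_mem_divisors hj) hlt,
        one_zpow]
    · have : m j = 0 := by
        by_contra hmj
        exact absurd (hmax j (Finset.mem_filter.mpr ⟨hj, hmj⟩)) (not_le.mpr hgt)
      rw [this, zpow_zero, map_one]

lemma intDegree_zpow (f : RatFunc ℚ) (hf : f ≠ 0) (m : ℤ) :
    (f ^ m).intDegree = m * f.intDegree := by
  have hnat : ∀ a : ℕ, (f ^ a).intDegree = a * f.intDegree := by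
    intro a
    induction a with
    | zero => simp
    | succ a ih =>
      rw [pow_succ, RatFunc.intDegree_mul (pow_ne_zero a hf) hf, ih]
      push_cast
      ring
  obtain ⟨a, rfl | rfl⟩ := m.eq_nat_or_neg
  · rw [zpow_natCast, hnat]
  · rw [zpow_neg, zpow_natCast, RatFunc.intDegree_inv, hnat, neg_mul]

lemma intDegree_prod {ι : Type*} (s : Finset ι) (f : ι → RatFunc ℚ) (hf : ∀ i ∈ s, f i ≠ 0) :
    (∏ i ∈ s, f i).intDegree = ∑ i ∈ s, (f i).intDegree := by
  classical
  induction s using Finset.induction_on with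
  | empty => simp
  | insert a s ha ih =>
    have hs : ∀ i ∈ s, f i ≠ 0 := fun i hi => hf i (Finset.mem_insert_of_mem hi)
    rw [Finset.prod_insert ha, Finset.sum_insert ha,
      RatFunc.intDegree_mul (hf a (Finset.mem_insert_self a s)) (Finset.prod_ne_zero_iff.mpr hs),
      ih hs]

lemma intDegree_one_sub_X_pow (k : ℕ) :
    (1 - (RatFunc.X : RatFunc ℚ) ^ k).intDegree = k := by
  have h : (1 - X ^ k : ℚ[X]).natDegree = k := by
    rw [← natDegree_neg, neg_sub]
    exact natDegree_X_pow_sub_C (r := 1)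
  rw [← algebraMap_one_sub_X_pow, RatFunc.intDegree_polynomial, h]

lemma natDegree_charpolyRev {N n : ℕ} (hn : 0 < n) (g : Matrix (Fin N) (Fin N) ℚ)
    (hg : g ^ n = 1) : g.charpolyRev.natDegree = N := by
  have hdet : g.det ≠ 0 := by
    intro h
    have := congrArg Matrix.det hg
    rw [Matrix.det_pow, h, zero_pow hn.ne', Matrix.det_one] at this
    exact zero_ne_one this
  have h0 : g.charpoly.coeff 0 ≠ 0 := by
    intro h
    rw [Matrix.det_eq_sign_charpoly_coeff, h, mul_zero] at hdet
    exact hdet rfl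
  rw [← Matrix.reverse_charpoly, reverse_natDegree, natTrailingDegree_eq_zero.mpr (Or.inr h0),
    Matrix.charpoly_natDegree_eq_dim, Fintype.card_fin, Nat.sub_zero]

/-- **Frame shapes exist and are unique.**
If `g` is an `N × N` rational matrix with `g ^ n = 1` (`N, n > 0`), then there is a unique
family of integers `m k`, supported on the positive divisors `k` of `n`, such that
`det (1 - X • g) = ∏_{k ∣ n} (1 - X ^ k) ^ (m k)` in the field of rational functions `ℚ(X)`;
moreover any such family satisfies `∑_{k ∣ n} k * m k = N`. -/
theorem frame_shape_exists_unique (N n : ℕ) (hN : 0 < N) (hn : 0 < n)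
    (g : Matrix (Fin N) (Fin N) ℚ) (hg : g ^ n = 1) :
    (∃! m : ℕ → ℤ,
      (∀ k, k ∉ n.divisors → m k = 0) ∧
      algebraMap (Polynomial ℚ) (RatFunc ℚ)
          (Matrix.det (1 - (X : Polynomial ℚ) • g.map C)) =
        ∏ k ∈ n.divisors, (1 - (RatFunc.X : RatFunc ℚ) ^ k) ^ (m k)) ∧
    (∀ m : ℕ → ℤ,
      ((∀ k, k ∉ n.divisors → m k = 0) ∧
        algebraMap (Polynomial ℚ) (RatFunc ℚ)
            (Matrix.det (1 - (X : Polynomial ℚ) • g.map C)) =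
          ∏ k ∈ n.divisors, (1 - (RatFunc.X : RatFunc ℚ) ^ k) ^ (m k)) →
      ∑ k ∈ n.divisors, (k : ℤ) * m k = (N : ℤ)) := by
  have hdet : Matrix.det (1 - (X : Polynomial ℚ) • g.map C) = g.charpolyRev := rfl
  rw [hdet]
  refine ⟨?_, ?_⟩
  · obtain ⟨m, hm⟩ := isFrameProduct_reverse n hn g.charpoly g.charpoly_monic
      (pow_eq_one_of_aeval_charpoly g hg)
    rw [Matrix.reverse_charpoly] at hm
    have hex : ∃ m : ℕ → ℤ, (∀ k, k ∉ n.divisors → m k = 0) ∧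
        algebraMap (Polynomial ℚ) (RatFunc ℚ) g.charpolyRev =
          ∏ k ∈ n.divisors, (1 - (RatFunc.X : RatFunc ℚ) ^ k) ^ (m k) := by
      refine ⟨fun k => if k ∈ n.divisors then m k else 0, fun k hk => if_neg hk, ?_⟩
      rw [hm]
      exact Finset.prod_congr rfl fun k hk => by simp only [if_pos hk]
    refine existsUnique_of_exists_of_unique hex ?_
    rintro m₁ m₂ ⟨hs₁, hp₁⟩ ⟨hs₂, hp₂⟩
    have hquot : ∏ k ∈ n.divisors, (1 - (RatFunc.X : RatFunc ℚ) ^ k) ^ ((m₁ - m₂) k) = 1 := by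
      have hne : ∏ k ∈ n.divisors, (1 - (RatFunc.X : RatFunc ℚ) ^ k) ^ (m₂ k) ≠ 0 :=
        Finset.prod_ne_zero_iff.mpr fun k hk =>
          zpow_ne_zero _ (ratFunc_one_sub_X_pow_ne_zero (Nat.pos_of_mem_divisors hk))
      simp only [Pi.sub_apply]
      rw [Finset.prod_congr rfl fun k hk => zpow_sub₀
        (ratFunc_one_sub_X_pow_ne_zero (Nat.pos_of_mem_divisors hk)) (m₁ k) (m₂ k),
        Finset.prod_div_distrib, ← hp₁, hp₂, div_self hne]
    funext k
    by_cases hk : k ∈ n.divisors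
    · exact sub_eq_zero.mp (eq_zero_of_prod_eq_one n _ hquot k hk)
    · rw [hs₁ k hk, hs₂ k hk]
  · rintro m ⟨-, hm⟩
    have hdeg := congrArg RatFunc.intDegree hm
    rw [RatFunc.intDegree_polynomial, natDegree_charpolyRev hn g hg, intDegree_prod _ _ fun k hk =>
      zpow_ne_zero _ (ratFunc_one_sub_X_pow_ne_zero (Nat.pos_of_mem_divisors hk))] at hdeg
    rw [hdeg]
    refine Finset.sum_congr rfl fun k hk => ?_
    rw [intDegree_zpow _ (ratFunc_one_sub_X_pow_ne_zero (Nat.pos_of_mem_divisors hk)),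
      intDegree_one_sub_X_pow, mul_comm]
end

section
/- Let G be a finite group acting linearly, faithfully, irreducibly, and primitively on a nonzero finite-dimensional complex vector space V. Then every abelian normal subgroup of G is cyclic. -/
/-!
This is Clifford's argument. Elements of finite order act semisimply over `ℂ`, so an abelian normal
subgroup `N` is simultaneously diagonalizable: `V` is the direct sum of the simultaneous eigenspaces
`weightSpace ρ N χ` (`iSupIndep_weightSpace`, `iSup_weightSpace`), and normality of `N` means that
`G` permutes them by conjugating the weight `χ` (`map_weightSpace`). Two distinct nonzero weight
spaces would therefore contradict primitivity, so there is exactly one and `N` acts by scalars.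
By faithfulness `N` embeds into `ℂ` as a multiplicative group, and a finite group with such an
embedding is cyclic.
-/

/-- The simultaneous eigenspace of a subgroup `N` with eigenvalue function `χ`. The function `χ` is
not assumed multiplicative: if it is not, the space is zero. -/
def weightSpace {G V : Type} [Group G] [AddCommGroup V] [Module ℂ V]
    (ρ : Representation ℂ G V) (N : Subgroup G) (χ : N → ℂ) : Submodule ℂ V :=
  ⨅ n : N, Module.End.eigenspace (ρ n) (χ n)

section WeightSpace

variable {G V : Type} [Group G] [AddCommGroup V] [Module ℂ V]
  (ρ : Representation ℂ G V) (N : Subgroup G)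

lemma mem_weightSpace {χ : N → ℂ} {x : V} :
    x ∈ weightSpace ρ N χ ↔ ∀ n : N, ρ n x = χ n • x := by
  simp [weightSpace, Submodule.mem_iInf]

/-- An element of a finite group is annihilated by the squarefree polynomial `X ^ k - 1`, hence
acts semisimply. -/
lemma maxGenEigenspace_eq_eigenspace_of_finite [Finite G] [FiniteDimensional ℂ V] (g : G) (μ : ℂ) :
    Module.End.maxGenEigenspace (ρ g) μ = Module.End.eigenspace (ρ g) μ := by
  have hs : Module.End.IsSemisimple (ρ g) := by
    refine Module.End.isSemisimple_of_squarefree_aeval_eq_zero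
      (p := Polynomial.X ^ orderOf g - Polynomial.C (1 : ℂ)) ?_ ?_
    · exact (Polynomial.separable_X_pow_sub_C (1 : ℂ)
        (by exact_mod_cast (orderOf_pos g).ne') one_ne_zero).squarefree
    · rw [map_sub, map_pow, Polynomial.aeval_X, ← map_pow, pow_orderOf_eq_one]
      simp
  exact hs.isFinitelySemisimple.maxGenEigenspace_eq_eigenspace μ

lemma weightSpace_eq_iInf_maxGenEigenspace [Finite G] [FiniteDimensional ℂ V] (χ : N → ℂ) :
    weightSpace ρ N χ = ⨅ n : N, Module.End.maxGenEigenspace (ρ n) (χ n) := by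
  simp [weightSpace, maxGenEigenspace_eq_eigenspace_of_finite]

variable {N} in
lemma commute_apply (hNab : ∀ a b : N, a * b = b * a) (a b : N) : Commute (ρ a) (ρ b) := by
  have h : (a : G) * b = b * a := by exact_mod_cast congrArg Subtype.val (hNab a b)
  rw [Commute, SemiconjBy, ← map_mul, h, map_mul]

lemma iSupIndep_weightSpace [Finite G] [FiniteDimensional ℂ V]
    (hNab : ∀ a b : N, a * b = b * a) : iSupIndep (weightSpace ρ N) := by
  have h := Module.End.independent_iInf_maxGenEigenspace_of_forall_mapsTo
    (fun n : N => ρ n)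
    (fun i j => Module.End.mapsTo_maxGenEigenspace_of_comm (commute_apply ρ hNab j i))
  simpa only [← weightSpace_eq_iInf_maxGenEigenspace] using h

lemma iSup_weightSpace [Finite G] [FiniteDimensional ℂ V]
    (hNab : ∀ a b : N, a * b = b * a) : ⨆ χ, weightSpace ρ N χ = ⊤ := by
  have h := Module.End.iSup_iInf_maxGenEigenspace_eq_top_of_iSup_maxGenEigenspace_eq_top_of_commute
    (fun n : N => ρ n) (fun i j _ => commute_apply ρ hNab i j)
    (fun n => Module.End.iSup_maxGenEigenspace_eq_top (ρ n))
  simpa only [← weightSpace_eq_iInf_maxGenEigenspace] using h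

lemma map_weightSpace [N.Normal] (g : G) (χ : N → ℂ) :
    (weightSpace ρ N χ).map (ρ g) =
      weightSpace ρ N (fun n => χ (MulAut.conjNormal g⁻¹ n)) := by
  ext y
  simp only [Submodule.mem_map, mem_weightSpace]
  constructor
  · rintro ⟨x, hx, rfl⟩ n
    rw [← map_smul, ← hx, ← Module.End.mul_apply, ← Module.End.mul_apply, ← map_mul, ← map_mul,
      MulAut.conjNormal_apply]
    simp [mul_assoc]
  · intro hy
    refine ⟨ρ g⁻¹ y, fun n => ?_, by simp⟩
    have h := congrArg (ρ g⁻¹) (hy (MulAut.conjNormal g n))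
    have hn : MulAut.conjNormal g⁻¹ (MulAut.conjNormal g n) = n := by
      simp
    rw [hn, map_smul, ← Module.End.mul_apply, ← map_mul, MulAut.conjNormal_apply] at h
    rw [← h, ← Module.End.mul_apply, ← map_mul]
    simp [mul_assoc]

end WeightSpace

/-- If a finite group `G` acts linearly, faithfully, irreducibly and primitively on a nonzero
finite-dimensional complex vector space `V`, then every abelian normal subgroup of `G` is
cyclic. -/
theorem abelian_normal_subgroup_cyclic_of_primitive {G : Type} [Group G] [Finite G]
    {V : Type} [AddCommGroup V] [Module ℂ V] [FiniteDimensional ℂ V] [Nontrivial V]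
    (ρ : Representation ℂ G V)
    (hfaith : Function.Injective ρ)
    (hirr : IsSimpleModule (MonoidAlgebra ℂ G) ρ.asModule)
    (hprim : ¬ ∃ (r : ℕ) (W : Fin r → Submodule ℂ V), 2 ≤ r ∧
      (∀ i, W i ≠ ⊥) ∧ iSupIndep W ∧ (⨆ i, W i) = ⊤ ∧
      ∀ (g : G) (i : Fin r), ∃ j, (W i).map (ρ g) = W j)
    (N : Subgroup G) (hN : N.Normal) (hNab : ∀ a b : N, a * b = b * a) :
    IsCyclic N := by
  have hind := iSupIndep_weightSpace ρ N hNab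
  have hsup := iSup_weightSpace ρ N hNab
  have hfin : {χ | weightSpace ρ N χ ≠ ⊥}.Finite := WellFoundedGT.finite_ne_bot_of_iSupIndep hind
  let S := {χ // weightSpace ρ N χ ≠ ⊥}
  have : Finite S := hfin
  let e : Fin (Nat.card S) ≃ S := (Finite.equivFin S).symm
  have hsupS : ⨆ s : S, weightSpace ρ N s.1 = ⊤ := by
    rw [← hsup]
    exact iSup_ne_bot_subtype (weightSpace ρ N)
  have hcard : ¬ 2 ≤ Nat.card S := by
    intro h2
    refine hprim ⟨Nat.card S, fun i => weightSpace ρ N (e i).1, h2, fun i => (e i).2,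
      hind.comp (Subtype.val_injective.comp e.injective), ?_, fun g i => ?_⟩
    · rw [← hsupS]
      exact e.iSup_comp (g := fun s : S => weightSpace ρ N s.1)
    · have hne : weightSpace ρ N (fun n => (e i).1 (MulAut.conjNormal g⁻¹ n)) ≠ ⊥ := by
        intro h
        refine (e i).2 (Submodule.map_injective_of_injective (ρ.apply_bijective g).injective ?_)
        rw [map_weightSpace, h, Submodule.map_bot]
      exact ⟨e.symm ⟨_, hne⟩, by simp [map_weightSpace]⟩
  have hsub : Subsingleton S := Finite.card_le_one_iff_subsingleton.1 (by omega)
  have hS : Nonempty S := by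
    by_contra h
    rw [not_nonempty_iff] at h
    rw [iSup_of_empty] at hsupS
    exact bot_ne_top hsupS
  obtain ⟨χ, hχ⟩ := hS
  have htop : weightSpace ρ N χ = ⊤ := by
    rw [← hsupS]
    refine le_antisymm (le_iSup (fun s : S => weightSpace ρ N s.1) ⟨χ, hχ⟩) (iSup_le fun s => ?_)
    rw [Subsingleton.elim s ⟨χ, hχ⟩]
  have hact : ∀ (n : N) (x : V), ρ n x = χ n • x := fun n x =>
    (mem_weightSpace ρ N).1 (htop ▸ Submodule.mem_top) n
  obtain ⟨v, hv⟩ := exists_ne (0 : V)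
  -- The weight is multiplicative, as one sees by evaluating at a nonzero vector.
  let f : N →* ℂ :=
    { toFun := χ
      map_one' := smul_left_injective ℂ hv (by simp [← hact])
      map_mul' := fun a b => smul_left_injective ℂ hv (by
        change χ (a * b) • v = (χ a * χ b) • v
        rw [mul_smul, ← hact b, ← hact a, ← hact (a * b)]
        simp) }
  let _ : CommGroup N := { (inferInstance : Group N) with mul_comm := hNab }
  refine isCyclic_of_injective_ringHom f fun a b hab => Subtype.ext (hfaith ?_)
  ext x
  change χ a = χ b at hab
  rw [hact, hact, hab]
end

section
/- Let V be a complex vector space, let N be a complex number, and let L, J : ℤ → End(V) be families of linear operators satisfying, for all integers m and n: [L(m), L(n)] = (m−n)·L(m+n) + ((m³−m)/12)·δ_{m+n,0}·N·Id; [L(m), J(n)] = −n·J(m+n); and [J(m), J(n)] = −m·δ_{m+n,0}·N·Id (so that the operators L(m), J(m) furnish a representation of the U(1) Virasoro algebra of rank N on V). For α ∈ ℂ define L_α(n) = L(n) + α·(−n−1)·J(n). Then for all integers m and n: [L_α(m), L_α(n)] = (m−n)·L_α(m+n) + ((m³−m)/12)·δ_{m+n,0}·N·(1+12α²)·Id;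 that is, the operators L_α(n) furnish a representation of the Virasoro algebra of rank N(1+12α²). -/
/-!
Expanding `[L_α(m), L_α(n)]` by bilinearity gives `[L(m), L(n)]` plus two further contributions.
The mixed commutators contribute `α (n(n+1) - m(m+1)) J(m+n) = (m-n) · α (-(m+n)-1) J(m+n)`,
which completes `L(m+n)` to `L_α(m+n)`. The commutator of the `J`-parts is
`α² (m+1)(n+1) · (-m) N δ_{m+n,0}`, which for `n = -m` equals `α² (m³-m) N`, that is,
`(m³-m)/12 · 12 α² N`: this is the shift of the central charge.
-/


/-- If operators `L(m), J(m)` on a complex vector space `V` furnish a representation of the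
`U(1)` Virasoro algebra of rank `N`, then for any `α ∈ ℂ` the operators
`L_α(n) = L(n) + α(-n-1) J(n)` satisfy the Virasoro relations with central charge
`N(1 + 12α²)`. -/
theorem u1_virasoro_deformation {V : Type*} [AddCommGroup V] [Module ℂ V] (N : ℂ)
    (L J : ℤ → Module.End ℂ V)
    (hLL : ∀ m n : ℤ, L m * L n - L n * L m
      = ((m : ℂ) - (n : ℂ)) • L (m + n)
        + (if m + n = 0 then ((m : ℂ) ^ 3 - (m : ℂ)) / 12 * N else 0) • (1 : Module.End ℂ V))
    (hLJ : ∀ m n : ℤ, L m * J n - J n * L m = (-(n : ℂ)) • J (m + n))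
    (hJJ : ∀ m n : ℤ, J m * J n - J n * J m
      = (if m + n = 0 then -(m : ℂ) * N else 0) • (1 : Module.End ℂ V)) :
    ∀ (α : ℂ) (Lα : ℤ → Module.End ℂ V),
      (∀ n : ℤ, Lα n = L n + (α * (-(n : ℂ) - 1)) • J n) →
      ∀ m n : ℤ, Lα m * Lα n - Lα n * Lα m
        = ((m : ℂ) - (n : ℂ)) • Lα (m + n)
          + (if m + n = 0 then ((m : ℂ) ^ 3 - (m : ℂ)) / 12 * (N * (1 + 12 * α ^ 2)) else 0)
              • (1 : Module.End ℂ V) := by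
  intro α Lα hLα m n
  -- Expand the commutator by bilinearity into the four given commutators.
  have expand : Lα m * Lα n - Lα n * Lα m
      = (L m * L n - L n * L m) + (α * (-(n : ℂ) - 1)) • (L m * J n - J n * L m)
        - (α * (-(m : ℂ) - 1)) • (L n * J m - J m * L n)
        + ((α * (-(m : ℂ) - 1)) * (α * (-(n : ℂ) - 1))) • (J m * J n - J n * J m) := by
    rw [hLα m, hLα n]
    simp only [mul_add, add_mul, smul_mul_assoc, mul_smul_comm, smul_sub, smul_smul, mul_comm,
      smul_add]
    module
  rw [expand, hLL, hLJ m n, hLJ n m, hJJ, hLα (m + n), add_comm n m]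
  push_cast
  split_ifs with h
  · -- The central terms agree only after substituting `n = -m`.
    obtain rfl : n = -m := by lia
    push_cast
    module
  · module
end

section
/- Let m be an integer and let f : ℂ × ℍ → ℂ be holomorphic in both variables, where ℍ denotes the complex upper half-plane, and suppose that f(z+1, τ) = f(z, τ) and f(z+τ, τ) = e^{−πim(2z+τ)}·f(z, τ) for all z ∈ ℂ and τ ∈ ℍ. Then the function g(z, τ) = e^{−πimz²/τ}·f(z/τ, −1/τ) (which is well defined since −1/τ ∈ ℍ) is holomorphic in both variables and satisfies the same two transformation laws: g(z+1, τ) = g(z, τ) and g(z+τ, τ) = e^{−πim(2z+τ)}·g(z, τ) for all z ∈ ℂ and τ ∈ ℍ. -/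
/-!
The inversion `τ ↦ -1/τ` maps the upper half-plane to itself and exchanges the two period
directions: under `w = z/τ`, `σ = -1/τ`, the shift `z ↦ z + τ` becomes `w ↦ w + 1`, and
`z ↦ z + 1` becomes `w ↦ w - σ`. Hence each law for `g` follows from the other law for `f`, and
the Gaussian prefactor `e^{-πimz²/τ}` contributes the completed square that corrects the
automorphy factor. Holomorphy is the chain rule, since `τ ≠ 0` on the upper half-plane.
-/

open Complex

/-- The `S`-transform `g(z,τ) = e^{-πimz²/τ} f(z/τ, -1/τ)` of a two-variable function. -/
noncomputable def jacobiSTransform (m : ℤ) (f : ℂ → ℂ → ℂ) (z τ : ℂ) : ℂ :=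
  Complex.exp (-(Real.pi : ℂ) * Complex.I * (m : ℂ) * z ^ 2 / τ) * f (z / τ) (-1 / τ)

/-- The inversion `τ ↦ -1/τ` preserves the upper half-plane. -/
lemma neg_one_div_im_pos {τ : ℂ} (hτ : 0 < τ.im) : 0 < (-1 / τ).im := by
  have h0 : τ ≠ 0 := by
    rintro rfl
    simp at hτ
  have hn : 0 < Complex.normSq τ := Complex.normSq_pos.mpr h0
  have h : (-1 / τ).im = τ.im / Complex.normSq τ := by
    rw [neg_div, one_div, Complex.neg_im, Complex.inv_im, neg_div, neg_neg]
  rw [h]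
  exact div_pos hτ hn

/-- Let `m ∈ ℤ` and let `f : ℂ × ℍ → ℂ` be holomorphic with `f(z+1,τ) = f(z,τ)` and
`f(z+τ,τ) = e^{-πim(2z+τ)} f(z,τ)`.  Then `g(z,τ) = e^{-πimz²/τ} f(z/τ, -1/τ)` is
holomorphic and satisfies the same two transformation laws. -/
theorem jacobi_S_transform_invariance (m : ℤ) (f : ℂ → ℂ → ℂ)
    (hf : DifferentiableOn ℂ (fun p : ℂ × ℂ => f p.1 p.2) {p : ℂ × ℂ | 0 < p.2.im})
    (h1 : ∀ (z τ : ℂ), 0 < τ.im → f (z + 1) τ = f z τ)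
    (h2 : ∀ (z τ : ℂ), 0 < τ.im →
      f (z + τ) τ = Complex.exp (-(Real.pi : ℂ) * Complex.I * (m : ℂ) * (2 * z + τ)) * f z τ) :
    DifferentiableOn ℂ (fun p : ℂ × ℂ => jacobiSTransform m f p.1 p.2)
        {p : ℂ × ℂ | 0 < p.2.im} ∧
    (∀ (z τ : ℂ), 0 < τ.im → jacobiSTransform m f (z + 1) τ = jacobiSTransform m f z τ) ∧
    (∀ (z τ : ℂ), 0 < τ.im →
      jacobiSTransform m f (z + τ) τ
        = Complex.exp (-(Real.pi : ℂ) * Complex.I * (m : ℂ) * (2 * z + τ))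
            * jacobiSTransform m f z τ) := by
  have ne0 : ∀ τ : ℂ, 0 < τ.im → τ ≠ 0 := by
    rintro τ hτ rfl
    simp at hτ
  refine ⟨?_, ?_, ?_⟩
  · unfold jacobiSTransform
    have hz : DifferentiableOn ℂ (fun p : ℂ × ℂ => p.1) {p : ℂ × ℂ | 0 < p.2.im} :=
      differentiableOn_fst
    have ht : DifferentiableOn ℂ (fun p : ℂ × ℂ => p.2) {p : ℂ × ℂ | 0 < p.2.im} :=
      differentiableOn_snd
    have hne : ∀ p ∈ {p : ℂ × ℂ | 0 < p.2.im}, p.2 ≠ 0 := fun p hp => ne0 p.2 hp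
    have hi : DifferentiableOn ℂ (fun p : ℂ × ℂ => p.2⁻¹) {p : ℂ × ℂ | 0 < p.2.im} :=
      ht.fun_inv hne
    have hφ : DifferentiableOn ℂ (fun p : ℂ × ℂ => (p.1 / p.2, -1 / p.2))
        {p : ℂ × ℂ | 0 < p.2.im} := by
      simpa only [div_eq_mul_inv] using (hz.fun_mul hi).prodMk (hi.const_mul (-1))
    have hcomp : DifferentiableOn ℂ (fun p : ℂ × ℂ => f (p.1 / p.2) (-1 / p.2))
        {p : ℂ × ℂ | 0 < p.2.im} :=
      hf.comp hφ fun p hp => neg_one_div_im_pos hp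
    have hexp : DifferentiableOn ℂ (fun p : ℂ × ℂ =>
        Complex.exp (-(Real.pi : ℂ) * Complex.I * (m : ℂ) * p.1 ^ 2 / p.2))
        {p : ℂ × ℂ | 0 < p.2.im} := by
      simpa only [div_eq_mul_inv] using (((hz.fun_pow 2).const_mul _).fun_mul hi).cexp
    exact hexp.fun_mul hcomp
  · intro z τ hτ
    unfold jacobiSTransform
    -- The quasi-period law at `w = (z + 1)/τ` with period `-1/τ`, which leads back to `z/τ`.
    have h := h2 ((z + 1) / τ) (-1 / τ) (neg_one_div_im_pos hτ)
    have hw : (z + 1) / τ + -1 / τ = z / τ := by ring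
    rw [hw] at h
    rw [h, ← mul_assoc, ← Complex.exp_add]
    congr 2
    ring
  · intro z τ hτ
    have h0 := ne0 τ hτ
    unfold jacobiSTransform
    have hw : (z + τ) / τ = z / τ + 1 := by field_simp
    rw [hw, h1 _ _ (neg_one_div_im_pos hτ), ← mul_assoc, ← Complex.exp_add]
    congr 2
    field_simp
    ring
end

section
/- For all z ∈ ℂ and τ ∈ ℍ, the function F satisfies F(z+1, τ) = F(z, τ) and F(z+τ, τ) = e^{−28πi(2z+τ)}·F(z, τ); that is, the two-variable character of the Rudvalis enhanced vertex operator superalgebra belongs to the class E_28 of doubly periodic-up-to-factor holomorphic functions on ℂ × ℍ. -/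
/-!
The theta function of the statement is Mathlib's `jacobiTheta₂`, and the eta function is
`ModularForm.eta`. Holomorphy follows from the holomorphy of these two functions and the
non-vanishing of `η` on the upper half-plane.

The transformation laws hold for each of the four summands of the numerator separately. Under
`z ↦ z + 1` each theta factor is invariant and the exponential prefactor picks up
`e^{28πi} = 1`. Under `z ↦ z + τ` the quasi-periodicity `θ(w+τ,τ) = e^{-πi(2w+τ)} θ(w,τ)`, taken
to the 28th power at `w = z + s`, gives the expected factor `e^{-28πi(2z+τ)}` times `e^{-56πis}`.
For `s = 1/2` the latter is `1`, and for `s = τ/2` it is `e^{-28πiτ}`, which cancels the change of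
the prefactor.
-/

open Complex

/-- The Jacobi theta function `θ(z,τ) = ∑_{m ∈ ℤ} e^{2πimz + πiτm²}`. -/
noncomputable def jacobiThetaFn (z τ : ℂ) : ℂ :=
  ∑' m : ℤ, Complex.exp (2 * (Real.pi : ℂ) * Complex.I * (m : ℂ) * z
    + (Real.pi : ℂ) * Complex.I * τ * (m : ℂ) ^ 2)

/-- The Dedekind eta function `η(τ) = e^{πiτ/12} ∏_{n=1}^∞ (1 - e^{2πinτ})`. -/
noncomputable def dedekindEtaFn (τ : ℂ) : ℂ :=
  Complex.exp ((Real.pi : ℂ) * Complex.I * τ / 12) *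
    ∏' n : ℕ, (1 - Complex.exp (2 * (Real.pi : ℂ) * Complex.I * ((n : ℂ) + 1) * τ))

/-- The two-variable character of the Rudvalis enhanced vertex operator superalgebra. -/
noncomputable def rudvalisCharacter (z τ : ℂ) : ℂ :=
  (jacobiThetaFn z τ ^ 28 + jacobiThetaFn (z + 1 / 2) τ ^ 28
    + Complex.exp (28 * (Real.pi : ℂ) * Complex.I * z + 7 * (Real.pi : ℂ) * Complex.I * τ)
        * jacobiThetaFn (z + τ / 2) τ ^ 28
    + Complex.exp (28 * (Real.pi : ℂ) * Complex.I * z + 7 * (Real.pi : ℂ) * Complex.I * τ)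
        * jacobiThetaFn (z + τ / 2 + 1 / 2) τ ^ 28)
    / (2 * dedekindEtaFn τ ^ 28)

theorem jacobiThetaFn_eq (z τ : ℂ) : jacobiThetaFn z τ = jacobiTheta₂ z τ := by
  simp only [jacobiThetaFn, jacobiTheta₂, jacobiTheta₂_term]
  congr! 3
  ring

theorem dedekindEtaFn_eq (τ : ℂ) : dedekindEtaFn τ = ModularForm.eta τ := by
  simp only [dedekindEtaFn, ModularForm.eta, ModularForm.eta_q_eq_cexp, Function.Periodic.qParam]
  congr 2
  push_cast
  ring

theorem differentiableAt_jacobiThetaFn_comp {f g : ℂ × ℂ → ℂ} {p : ℂ × ℂ}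
    (hf : DifferentiableAt ℂ f p) (hg : DifferentiableAt ℂ g p) (hp : 0 < (g p).im) :
    DifferentiableAt ℂ (fun x => jacobiThetaFn (f x) (g x)) p := by
  simp only [jacobiThetaFn_eq]
  exact (hasFDerivAt_jacobiTheta₂ (f p) hp).differentiableAt.comp p (hf.prodMk hg)

theorem jacobiThetaFn_add_one (z τ : ℂ) : jacobiThetaFn (z + 1) τ = jacobiThetaFn z τ := by
  simp only [jacobiThetaFn_eq, jacobiTheta₂_add_left]

theorem jacobiThetaFn_add_tau_pow (z τ : ℂ) :
    jacobiThetaFn (z + τ) τ ^ 28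
      = exp (-28 * (Real.pi : ℂ) * I * (2 * z + τ)) * jacobiThetaFn z τ ^ 28 := by
  rw [jacobiThetaFn_eq, jacobiThetaFn_eq, jacobiTheta₂_add_left', mul_pow, ← exp_nat_mul]
  congr 2
  push_cast
  ring


/-- The two-variable character `F` of the Rudvalis enhanced VOSA is holomorphic on `ℂ × ℍ`
and satisfies `F(z+1,τ) = F(z,τ)` and `F(z+τ,τ) = e^{-28πi(2z+τ)} F(z,τ)`; that is, it
belongs to the class `E₂₈`. -/
theorem rudvalis_character_mem_E28 :
    DifferentiableOn ℂ (fun p : ℂ × ℂ => rudvalisCharacter p.1 p.2)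
        {p : ℂ × ℂ | 0 < p.2.im} ∧
    (∀ (z τ : ℂ), 0 < τ.im → rudvalisCharacter (z + 1) τ = rudvalisCharacter z τ) ∧
    (∀ (z τ : ℂ), 0 < τ.im →
      rudvalisCharacter (z + τ) τ
        = Complex.exp (-28 * (Real.pi : ℂ) * Complex.I * (2 * z + τ))
            * rudvalisCharacter z τ) := by
  refine ⟨fun p hp => ?_, fun z τ _ => ?_, fun z τ _ => ?_⟩
  · have hp' : 0 < p.2.im := hp
    have hη : ModularForm.eta p.2 ≠ 0 := ModularForm.eta_ne_zero hp'
    have hηd : DifferentiableAt ℂ (fun x : ℂ × ℂ => dedekindEtaFn x.2) p := by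
      simp only [dedekindEtaFn_eq]
      exact (ModularForm.differentiableAt_eta_of_mem_upperHalfPlaneSet hp').comp p
        differentiableAt_snd
    have hθ (s : ℂ × ℂ → ℂ) (hs : DifferentiableAt ℂ s p) :
        DifferentiableAt ℂ (fun x : ℂ × ℂ => jacobiThetaFn (s x) x.2) p :=
      differentiableAt_jacobiThetaFn_comp hs differentiableAt_snd hp'
    have h0 := hθ (fun x => x.1) (by fun_prop)
    have h1 := hθ (fun x => x.1 + 1 / 2) (by fun_prop)
    have h2 := hθ (fun x => x.1 + x.2 / 2) (by fun_prop)
    have h3 := hθ (fun x => x.1 + x.2 / 2 + 1 / 2) (by fun_prop)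
    refine DifferentiableAt.differentiableWithinAt ?_
    have hne : 2 * dedekindEtaFn p.2 ^ 28 ≠ 0 := by
      rw [dedekindEtaFn_eq]
      exact mul_ne_zero two_ne_zero (pow_ne_zero _ hη)
    have hinv : DifferentiableAt ℂ (fun x : ℂ × ℂ => (2 * dedekindEtaFn x.2 ^ 28)⁻¹) p :=
      DifferentiableAt.fun_inv (by fun_prop) hne
    simp only [rudvalisCharacter, div_eq_mul_inv _ (2 * dedekindEtaFn _ ^ 28)]
    fun_prop
  · have hexp : exp (28 * (Real.pi : ℂ) * I * (z + 1) + 7 * (Real.pi : ℂ) * I * τ)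
        = exp (28 * (Real.pi : ℂ) * I * z + 7 * (Real.pi : ℂ) * I * τ) :=
      exp_eq_exp_iff_exists_int.mpr ⟨14, by push_cast; ring⟩
    simp only [rudvalisCharacter, hexp, add_right_comm z 1, add_right_comm (z + τ / 2) 1,
      jacobiThetaFn_add_one]
  · set E := exp (-28 * (Real.pi : ℂ) * I * (2 * z + τ)) with hE
    have h0 : jacobiThetaFn (z + τ) τ ^ 28 = E * jacobiThetaFn z τ ^ 28 :=
      jacobiThetaFn_add_tau_pow z τ
    have h1 : jacobiThetaFn (z + τ + 1 / 2) τ ^ 28 = E * jacobiThetaFn (z + 1 / 2) τ ^ 28 := by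
      rw [add_right_comm, jacobiThetaFn_add_tau_pow, hE]
      congr 1
      exact exp_eq_exp_iff_exists_int.mpr ⟨-14, by push_cast; ring⟩
    have h2 : exp (28 * (Real.pi : ℂ) * I * (z + τ) + 7 * (Real.pi : ℂ) * I * τ)
          * jacobiThetaFn (z + τ + τ / 2) τ ^ 28
        = E * (exp (28 * (Real.pi : ℂ) * I * z + 7 * (Real.pi : ℂ) * I * τ)
          * jacobiThetaFn (z + τ / 2) τ ^ 28) := by
      rw [add_right_comm z τ, jacobiThetaFn_add_tau_pow, hE, ← mul_assoc, ← mul_assoc,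
        ← exp_add, ← exp_add]
      congr 2
      ring
    have h3 : exp (28 * (Real.pi : ℂ) * I * (z + τ) + 7 * (Real.pi : ℂ) * I * τ)
          * jacobiThetaFn (z + τ + τ / 2 + 1 / 2) τ ^ 28
        = E * (exp (28 * (Real.pi : ℂ) * I * z + 7 * (Real.pi : ℂ) * I * τ)
          * jacobiThetaFn (z + τ / 2 + 1 / 2) τ ^ 28) := by
      rw [add_right_comm z τ, add_right_comm (z + τ / 2) τ, jacobiThetaFn_add_tau_pow, hE,
        ← mul_assoc, ← mul_assoc, ← exp_add, ← exp_add]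
      congr 1
      exact exp_eq_exp_iff_exists_int.mpr ⟨-14, by push_cast; ring⟩
    simp only [rudvalisCharacter]
    rw [h0, h1, h2, h3]
    ring
end
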